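/- Let U ⊆ ℍ be dense and let S := { t ∈ List ℕ : (t, h) ∈ U for some h }. Then every t ∈ List ℕ is S-reachable. -/

import Mathlib

/-!
If infinitely many one-point extensions of `s` are reachable, so is `s`. Hence an unreachable `s`
has only finitely many reachable one-point extensions, and a side condition `h` can be chosen so
that every extension of an unreachable `s` by some `n ≥ h s` is again unreachable. If `t` were
unreachable, then all end-extensions of `t` to the right of `h` would be unreachable too. But
density below `(t, h)` yields such an end-extension which is the stem of a condition in `U`, and
stems are reachable of rank `0`.
-/

open Classical in
/-- `t` is `α`-`S`-reachable: for `α = 0` this means `t ∈ S`; for `α > 0` it means `t` is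
`β`-`S`-reachable for some `β < α`, or infinitely many `n` are such that `t ++ [n]` is
`β`-`S`-reachable for some `β < α`. -/
def ReachableAt (S : Set (List ℕ)) (α : Ordinal.{0}) (t : List ℕ) : Prop :=
  if α = 0 then t ∈ S
  else (∃ β : Ordinal.{0}, ∃ _ : β < α, ReachableAt S β t) ∨
    { n : ℕ | ∃ β : Ordinal.{0}, ∃ _ : β < α, ReachableAt S β (t ++ [n]) }.Infinite
termination_by α

/-- `t` is `S`-reachable iff it is `α`-`S`-reachable for some ordinal `α`. -/
def IsReachable (S : Set (List ℕ)) (t : List ℕ) : Prop :=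
  ∃ α : Ordinal.{0}, ReachableAt S α t

/-- `t₂ ⊒_h t₁`: `t₂` is an end-extension of `t₁` to the right of `h`, i.e. `t₂(n) ≥ h(t₂ ↾ n)`
for every `n` with `|t₁| ≤ n < |t₂|`. -/
def ExtRight (h : List ℕ → ℕ) (t₁ t₂ : List ℕ) : Prop :=
  t₁ <+: t₂ ∧ ∀ (n : ℕ) (hn : n < t₂.length), t₁.length ≤ n → h (t₂.take n) ≤ t₂.get ⟨n, hn⟩

/-- A condition of the Hechler-type poset `ℍ`: a pair `(t, h)` with `t ∈ List ℕ` a stem and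
`h : List ℕ → ℕ` a side condition. -/
abbrev Hcond : Type := List ℕ × (List ℕ → ℕ)

/-- The order on `ℍ`: `(t₂, h₂) ≤ (t₁, h₁)` iff `t₂ ⊒_{h₁} t₁` and `h₂ ≥ h₁` pointwise. -/
def Hle (p q : Hcond) : Prop :=
  ExtRight q.2 q.1 p.1 ∧ ∀ s : List ℕ, q.2 s ≤ p.2 s

/-- The ranks of the reachable sequences `s ++ [n]` have a common strict upper bound, namely the
successor of their supremum, and this bound is a rank for `s`. -/
theorem isReachable_of_infinite {S : Set (List ℕ)} {s : List ℕ}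
    (hs : { n : ℕ | IsReachable S (s ++ [n]) }.Infinite) : IsReachable S s := by
  classical
  -- `r n` is a rank of `s ++ [n]` if there is one, and junk otherwise.
  let r : ℕ → Ordinal.{0} := fun n =>
    if h : IsReachable S (s ++ [n]) then h.choose else 0
  have hr : ∀ n, IsReachable S (s ++ [n]) → ReachableAt S (r n) (s ++ [n]) := by
    intro n h
    simp only [r, dif_pos h]
    exact h.choose_spec
  refine ⟨Order.succ (⨆ n, r n), ?_⟩
  have hne : Order.succ (⨆ n, r n) ≠ 0 := (Order.bot_lt_succ _).ne'
  rw [ReachableAt, if_neg hne]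
  refine Or.inr (hs.mono fun n hn => ⟨r n, ?_, hr n hn⟩)
  exact Order.lt_succ_of_le (Ordinal.le_iSup r n)

/-- If `U ⊆ ℍ` is dense and `S` is the set of stems of conditions in `U`, then every
`t : List ℕ` is `S`-reachable. -/
theorem stmt10 (U : Set Hcond) (hdense : ∀ p : Hcond, ∃ p' ∈ U, Hle p' p) (t : List ℕ) :
    IsReachable { s : List ℕ | ∃ h : List ℕ → ℕ, (s, h) ∈ U } t := by
  by_contra ht
  set S : Set (List ℕ) := { s : List ℕ | ∃ h : List ℕ → ℕ, (s, h) ∈ U }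
  have hbound : ∀ s : List ℕ, ∃ k : ℕ, ¬ IsReachable S s →
      ∀ n, k ≤ n → ¬ IsReachable S (s ++ [n]) := by
    intro s
    by_cases hs : IsReachable S s
    · exact ⟨0, fun h => absurd hs h⟩
    · have hfin : { n : ℕ | IsReachable S (s ++ [n]) }.Finite := by
        by_contra hinf
        exact hs (isReachable_of_infinite hinf)
      obtain ⟨b, hb⟩ := hfin.bddAbove
      refine ⟨b + 1, fun _ n hn hreach => ?_⟩
      have : n ≤ b := hb hreach
      omega
  choose h hh using hbound
  obtain ⟨⟨t', h'⟩, hU, ⟨hpre, hext⟩, -⟩ := hdense (t, h)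
  have hstep : ∀ n, t.length ≤ n → n ≤ t'.length → ¬ IsReachable S (t'.take n) := by
    intro n hn
    induction n, hn using Nat.le_induction with
    | base =>
      intro _
      rwa [← List.prefix_iff_eq_take.mp hpre]
    | succ n hn ih =>
      intro hlt
      have hlt' : n < t'.length := hlt
      rw [List.take_succ_eq_append_getElem hlt']
      exact hh _ (ih hlt'.le) _ (hext n hlt' hn)
  refine hstep t'.length hpre.length_le le_rfl ?_
  rw [List.take_length]
  refine ⟨0, ?_⟩
  rw [ReachableAt, if_pos rfl]
  exact ⟨h', hU⟩
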